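/- arXiv:2212.13230 — 8 statements merged into one kernel-verified Lean document; each statement's English description precedes it below -/
import Mathlib

section
/- Let k₃ ∈ ℝ and let w : ℝ × ℝ → ℝ be a smooth function satisfying w_t(t,z) = w(t,z)² · w_zz(t,z) for all (t,z). Define u : ℝ × ℝ → ℝ by u(t,x) := w(t, x + k₃t)². Then u satisfies u_t = k₃·u_x − u_x²/2 + u·u_xx at every point (t,x). -/
/-- Partial derivative with respect to the first (time) variable. -/
noncomputable def dt (u : ℝ → ℝ → ℝ) (t x : ℝ) : ℝ := deriv (fun s => u s x) t

/-- `n`-th partial derivative with respect to the second (space) variable. -/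
noncomputable def dx (u : ℝ → ℝ → ℝ) (n : ℕ) (t x : ℝ) : ℝ := iteratedDeriv n (u t) x

theorem stmt_0 (k₃ : ℝ) (w : ℝ → ℝ → ℝ)
    (hw : ContDiff ℝ (⊤ : ℕ∞) fun p : ℝ × ℝ => w p.1 p.2)
    (hweq : ∀ t z, dt w t z = (w t z) ^ 2 * dx w 2 t z)
    (u : ℝ → ℝ → ℝ)
    (hu : ∀ t x, u t x = (w t (x + k₃ * t)) ^ 2) :
    ∀ t x, dt u t x =
      k₃ * dx u 1 t x - (dx u 1 t x) ^ 2 / 2 + u t x * dx u 2 t x := by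
  intro t x
  have hW : Differentiable ℝ (fun p : ℝ × ℝ => w p.1 p.2) := hw.differentiable (by simp)
  have hs : ∀ t, ContDiff ℝ (⊤ : ℕ∞) (w t) := fun t =>
    hw.comp (contDiff_const.prodMk contDiff_id : ContDiff ℝ (⊤ : ℕ∞) (fun z : ℝ => (t, z)))
  have hd1 : ∀ t z, HasDerivAt (w t) (deriv (w t) z) z := fun t z =>
    (((hs t).differentiable (by simp)) z).hasDerivAt
  have hd2 : ∀ t z, HasDerivAt (deriv (w t)) (deriv (deriv (w t)) z) z := fun t z => by
    have h2 : ContDiff ℝ 2 (w t) := contDiff_infty.1 (hs t) 2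
    have h3 : ContDiff ℝ 1 (deriv (w t)) := by
      have h4 : ContDiff ℝ (1 + 1) (w t) := by
        rw [one_add_one_eq_two]; exact h2
      exact (contDiff_succ_iff_deriv.1 h4).2.2
    exact ((h3.differentiable (by simp)) z).hasDerivAt
  have hut : ∀ t, u t = fun x => (w t (x + k₃ * t)) ^ 2 := fun t => funext (hu t)
  have e1 : ∀ t, deriv (u t) =
      fun x => 2 * w t (x + k₃ * t) * deriv (w t) (x + k₃ * t) := by
    intro t
    funext x
    rw [hut]
    have h := ((hd1 t (x + k₃ * t)).comp_add_const x (k₃ * t)).pow 2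
    refine (h.congr_deriv ?_).deriv
    simp
  have e2 : deriv (deriv (u t)) x = 2 * (deriv (w t) (x + k₃ * t)) ^ 2
      + 2 * w t (x + k₃ * t) * deriv (deriv (w t)) (x + k₃ * t) := by
    rw [e1]
    have h := (((hd1 t (x + k₃ * t)).comp_add_const x (k₃ * t)).const_mul 2).mul
      ((hd2 t (x + k₃ * t)).comp_add_const x (k₃ * t))
    refine (h.congr_deriv ?_).deriv
    ring
  have e3 : dt u t x = 2 * w t (x + k₃ * t) *
      (dt w t (x + k₃ * t) + k₃ * deriv (w t) (x + k₃ * t)) := by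
    set z := x + k₃ * t with hz
    have hF := (hW (t, z)).hasFDerivAt
    set L := fderiv ℝ (fun p : ℝ × ℝ => w p.1 p.2) (t, z) with hL
    have ht : HasDerivAt (fun s => w s z) (L (1, 0)) t :=
      HasFDerivAt.comp_hasDerivAt (f := fun s : ℝ => (s, z)) t hF ((hasDerivAt_id t).prodMk (hasDerivAt_const t z))
    have hx : HasDerivAt (w t) (L (0, 1)) z :=
      HasFDerivAt.comp_hasDerivAt (f := fun y : ℝ => (t, y)) z hF ((hasDerivAt_const z t).prodMk (hasDerivAt_id z))
    have hline : HasDerivAt (fun s : ℝ => x + k₃ * s) k₃ t := by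
      simpa using ((hasDerivAt_id t).const_mul k₃).const_add x
    have hc : HasDerivAt (fun s => w s (x + k₃ * s)) (L (1, k₃)) t :=
      HasFDerivAt.comp_hasDerivAt (f := fun s : ℝ => (s, x + k₃ * s)) t hF
        ((hasDerivAt_id t).prodMk hline)
    have hsplit : L (1, k₃) = L (1, 0) + k₃ * L (0, 1) := by
      rw [← smul_eq_mul, ← map_smul, ← map_add]
      simp
    have hfun : (fun s => u s x) = fun s => (w s (x + k₃ * s)) ^ 2 :=
      funext fun s => hu s x
    unfold dt
    rw [ht.deriv, hx.deriv, hfun, ← hsplit]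
    refine ((hc.pow 2).congr_deriv ?_).deriv
    simp [hz]
  rw [e3, hweq, hu]
  simp only [dx, iteratedDeriv_succ, iteratedDeriv_zero]
  rw [e2, e1]
  ring
end

section
/- Let p₁, p₂, k₂, k₃ ∈ ℝ and let u : ℝ × ℝ → ℝ be smooth with 3u(t,x) − 8p₁ > 0 for all (t,x). Suppose u satisfies u_t = p₂(3u − 8p₁)^{8/3}u_xx + p₂(3u − 8p₁)^{5/3}u_x² + (k₃ + k₂p₂(3u − 8p₁)^{8/3})u_x at every point. Then w := p₂(3u − 8p₁)^{8/3} satisfies w_t = (k₃ + k₂w)w_x − w_x²/2 + w·w_xx at every point. -/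
theorem stmt_2 (p₁ p₂ k₂ k₃ : ℝ) (u : ℝ → ℝ → ℝ)
    (hu : ContDiff ℝ (⊤ : ℕ∞) fun p : ℝ × ℝ => u p.1 p.2)
    (hpos : ∀ t x, 3 * u t x - 8 * p₁ > 0)
    (heq : ∀ t x, dt u t x =
      p₂ * (3 * u t x - 8 * p₁) ^ ((8 : ℝ) / 3) * dx u 2 t x
      + p₂ * (3 * u t x - 8 * p₁) ^ ((5 : ℝ) / 3) * (dx u 1 t x) ^ 2
      + (k₃ + k₂ * p₂ * (3 * u t x - 8 * p₁) ^ ((8 : ℝ) / 3)) * dx u 1 t x)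
    (w : ℝ → ℝ → ℝ)
    (hw : ∀ t x, w t x = p₂ * (3 * u t x - 8 * p₁) ^ ((8 : ℝ) / 3)) :
    ∀ t x, dt w t x =
      (k₃ + k₂ * w t x) * dx w 1 t x - (dx w 1 t x) ^ 2 / 2 + w t x * dx w 2 t x := by
  have hx : ∀ t, ContDiff ℝ (⊤ : ℕ∞) (u t) := fun t =>
    hu.comp (contDiff_const.prodMk contDiff_id : ContDiff ℝ (⊤ : ℕ∞) fun x : ℝ => (t, x))
  have ht : ∀ x, ContDiff ℝ (⊤ : ℕ∞) (fun s => u s x) := fun x =>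
    hu.comp (contDiff_id.prodMk contDiff_const : ContDiff ℝ (⊤ : ℕ∞) fun s : ℝ => (s, x))
  intro t x
  have key : ∀ (f : ℝ → ℝ) (r df y : ℝ), HasDerivAt f df y → 3 * f y - 8 * p₁ > 0 →
      HasDerivAt (fun z => (3 * f z - 8 * p₁) ^ r)
        (3 * df * r * (3 * f y - 8 * p₁) ^ (r - 1)) y := by
    intro f r df y hf hp
    exact ((hf.const_mul 3).sub_const _).rpow_const (Or.inl hp.ne')
  have hux : ∀ y, HasDerivAt (u t) (deriv (u t) y) y := fun y =>
    ((hx t).differentiable (by simp) y).hasDerivAt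
  have hdd : ContDiff ℝ 1 (deriv (u t)) := by
    have h2 : ContDiff ℝ (1 + 1) (u t) := (hx t).of_le (by norm_cast)
    exact (contDiff_succ_iff_deriv.1 h2).2.2
  have huxx : HasDerivAt (deriv (u t)) (deriv (deriv (u t)) x) x :=
    (hdd.differentiable (by simp) x).hasDerivAt
  have hut : HasDerivAt (fun s => u s x) (dt u t x) t :=
    ((ht x).differentiable (by simp) t).hasDerivAt
  have e1 : (8 : ℝ) / 3 - 1 = 5 / 3 := by norm_num
  have e2 : (5 : ℝ) / 3 - 1 = 2 / 3 := by norm_num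
  have wt : dt w t x = 8 * p₂ * (3 * u t x - 8 * p₁) ^ ((5 : ℝ) / 3) * dt u t x := by
    have h := (key _ (8 / 3) _ t hut (hpos t x)).const_mul p₂
    have hf : (fun s => w s x) = fun s => p₂ * (3 * u s x - 8 * p₁) ^ ((8 : ℝ) / 3) :=
      funext fun s => hw s x
    rw [dt, hf, h.deriv, e1]; ring
  have hf : w t = fun y => p₂ * (3 * u t y - 8 * p₁) ^ ((8 : ℝ) / 3) := funext (hw t)
  have wx : deriv (w t) =
      fun y => 8 * p₂ * ((3 * u t y - 8 * p₁) ^ ((5 : ℝ) / 3) * deriv (u t) y) := by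
    funext y
    have h := (key _ (8 / 3) _ y (hux y) (hpos t y)).const_mul p₂
    rw [hf, h.deriv, e1]; ring
  have wxx : deriv (deriv (w t)) x = 8 * p₂ * (5 * (3 * u t x - 8 * p₁) ^ ((2 : ℝ) / 3)
      * deriv (u t) x ^ 2 + (3 * u t x - 8 * p₁) ^ ((5 : ℝ) / 3) * deriv (deriv (u t)) x) := by
    have h := ((key _ (5 / 3) _ x (hux x) (hpos t x)).mul huxx).const_mul (8 * p₂)
    rw [wx]
    refine h.deriv.trans ?_
    rw [e2]; ring
  have hd1 : ∀ v : ℝ → ℝ → ℝ, dx v 1 t x = deriv (v t) x := fun v => by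
    simp [dx, iteratedDeriv_one]
  have hd2 : ∀ v : ℝ → ℝ → ℝ, dx v 2 t x = deriv (deriv (v t)) x := fun v => by
    simp [dx, iteratedDeriv_succ, iteratedDeriv_zero]
  have r : (3 * u t x - 8 * p₁) ^ ((8 : ℝ) / 3) * (3 * u t x - 8 * p₁) ^ ((2 : ℝ) / 3)
      = ((3 * u t x - 8 * p₁) ^ ((5 : ℝ) / 3)) ^ 2 := by
    rw [sq, ← Real.rpow_add (hpos t x), ← Real.rpow_add (hpos t x)]; norm_num
  rw [wt, heq, hd1, hd2, hd1, hd2, wxx, wx, hw]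
  linear_combination (-40 * p₂ ^ 2 * deriv (u t) x ^ 2) * r
end

section
/- Let d₁ ∈ ℂ and let w : ℂ × ℂ → ℂ be an entire (everywhere complex-differentiable, jointly holomorphic) function satisfying the Burgers equation w_y = w_zz + w·w_z at every point (y,z). For t ∈ ℂ with t ≠ 1 and x ∈ ℂ, set y := 1/(t−1), z := −i·y·x − i·d₁/(2y), and define u(t,x) := d₁/y − i·z − i·y·w(y,z), where i is the imaginary unit. Then u satisfies u_t = u_xx + u·u_x + d₁ at every point (t,x) with t ≠ 1, where the partial derivatives are complex partial derivatives. -/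
/-- Complex partial derivative with respect to the first variable. -/
noncomputable def cdt (u : ℂ → ℂ → ℂ) (t x : ℂ) : ℂ := deriv (fun s => u s x) t

/-- `n`-th complex partial derivative with respect to the second variable. -/
noncomputable def cdx (u : ℂ → ℂ → ℂ) (n : ℕ) (t x : ℂ) : ℂ := iteratedDeriv n (u t) x

theorem stmt_4 (d₁ : ℂ) (w : ℂ → ℂ → ℂ)
    (hw : Differentiable ℂ fun p : ℂ × ℂ => w p.1 p.2)
    (hweq : ∀ y z, cdt w y z = cdx w 2 y z + w y z * cdx w 1 y z)
    (u : ℂ → ℂ → ℂ)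
    (hu : ∀ t x, t ≠ 1 → u t x =
      d₁ / (1 / (t - 1))
      - Complex.I * (-Complex.I * (1 / (t - 1)) * x - Complex.I * d₁ / (2 * (1 / (t - 1))))
      - Complex.I * (1 / (t - 1)) *
          w (1 / (t - 1))
            (-Complex.I * (1 / (t - 1)) * x - Complex.I * d₁ / (2 * (1 / (t - 1))))) :
    ∀ t x, t ≠ 1 → cdt u t x = cdx u 2 t x + u t x * cdx u 1 t x + d₁ := by
  intro t x ht
  have ht0 : t - 1 ≠ 0 := sub_ne_zero.mpr ht
  -- sections in the second variable
  have hwz : ∀ y, Differentiable ℂ (w y) := fun y =>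
    hw.comp (f := fun z : ℂ => ((y, z) : ℂ × ℂ)) (by fun_prop)
  have hwz2 : ∀ y, Differentiable ℂ (deriv (w y)) := fun y => by
    have := (hwz y).contDiff (n := 2)
    exact this.differentiable_deriv_two
  -- total derivative in terms of partial derivatives
  have hfd : ∀ y z p q : ℂ, fderiv ℂ (fun p : ℂ × ℂ => w p.1 p.2) (y, z) (p, q)
      = p * cdt w y z + q * deriv (w y) z := by
    intro y z p q
    have h1 : HasDerivAt (fun s => w s z)
        (fderiv ℂ (fun p : ℂ × ℂ => w p.1 p.2) (y, z) (1, 0)) y :=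
      (hw (y, z)).hasFDerivAt.comp_hasDerivAt (f := fun s : ℂ => ((s, z) : ℂ × ℂ)) y
        ((hasDerivAt_id y).prodMk (hasDerivAt_const y z))
    have h2 : HasDerivAt (w y)
        (fderiv ℂ (fun p : ℂ × ℂ => w p.1 p.2) (y, z) (0, 1)) z :=
      (hw (y, z)).hasFDerivAt.comp_hasDerivAt (f := fun s : ℂ => ((y, s) : ℂ × ℂ)) z
        ((hasDerivAt_const z y).prodMk (hasDerivAt_id z))
    rw [cdt, h1.deriv, h2.deriv, ← smul_eq_mul, ← smul_eq_mul, ← map_smul, ← map_smul, ← map_add]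
    simp
  have hux : ∀ x, HasDerivAt (u t) (-(1 / (t - 1)) - (1 / (t - 1)) ^ 2 *
      deriv (w (1 / (t - 1)))
        (-Complex.I * (1 / (t - 1)) * x - Complex.I * d₁ / (2 * (1 / (t - 1))))) x := by
    intro x
    have hf : u t = _ := funext fun x => hu t x ht
    rw [hf]
    have hz : HasDerivAt (fun x : ℂ =>
        -Complex.I * (1 / (t - 1)) * x - Complex.I * d₁ / (2 * (1 / (t - 1))))
        (-Complex.I * (1 / (t - 1))) x := by
      simpa using ((hasDerivAt_id x).const_mul (-Complex.I * (1 / (t - 1)))).sub_const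
        (Complex.I * d₁ / (2 * (1 / (t - 1))))
    have hc := (hwz (1 / (t - 1)) _).hasDerivAt.comp x hz
    refine (((hz.const_mul Complex.I).const_sub (d₁ / (1 / (t - 1)))).sub
      (hc.const_mul (Complex.I * (1 / (t - 1))))).congr_deriv ?_
    linear_combination ((1 / (t - 1)) + (1 / (t - 1)) ^ 2 * deriv (w (1 / (t - 1)))
        (-Complex.I * (1 / (t - 1)) * x - Complex.I * d₁ / (2 * (1 / (t - 1))))) * Complex.I_sq
  have hd1 : deriv (u t) = _ := funext fun x => (hux x).deriv
  have huxx : HasDerivAt (deriv (u t)) (Complex.I * (1 / (t - 1)) ^ 3 *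
      deriv (deriv (w (1 / (t - 1))))
        (-Complex.I * (1 / (t - 1)) * x - Complex.I * d₁ / (2 * (1 / (t - 1))))) x := by
    rw [hd1]
    have hz : HasDerivAt (fun x : ℂ =>
        -Complex.I * (1 / (t - 1)) * x - Complex.I * d₁ / (2 * (1 / (t - 1))))
        (-Complex.I * (1 / (t - 1))) x := by
      simpa using ((hasDerivAt_id x).const_mul (-Complex.I * (1 / (t - 1)))).sub_const
        (Complex.I * d₁ / (2 * (1 / (t - 1))))
    have hc := (hwz2 (1 / (t - 1)) _).hasDerivAt.comp x hz
    refine ((hc.const_mul ((1 / (t - 1)) ^ 2)).const_sub (-(1 / (t - 1)))).congr_deriv ?_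
    ring
  have hy : HasDerivAt (fun t : ℂ => 1 / (t - 1)) (-(1 / (t - 1)) ^ 2) t := by
    have := ((hasDerivAt_id t).sub_const 1).inv ht0
    simp only [one_div]
    refine this.congr_deriv ?_
    simp [div_eq_mul_inv]
  have hdy : ∀ c : ℂ, HasDerivAt (fun t : ℂ => c / (1 / (t - 1))) c t := by
    intro c
    have := ((hasDerivAt_id t).sub_const 1).const_mul c
    simpa [div_eq_mul_inv] using this
  have hzt : HasDerivAt (fun t : ℂ =>
      -Complex.I * (1 / (t - 1)) * x - Complex.I * d₁ / (2 * (1 / (t - 1))))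
      (Complex.I * (1 / (t - 1)) ^ 2 * x - Complex.I * d₁ / 2) t := by
    have := ((hy.const_mul (-Complex.I)).mul_const x).sub (hdy (Complex.I * d₁ / 2))
    refine (this.congr_deriv (by ring)).congr_of_eventuallyEq (Filter.Eventually.of_forall ?_)
    intro s
    simp only [Pi.sub_apply, one_div]
    rw [mul_comm (2 : ℂ), ← div_div, div_right_comm]
  have hwt := (hw (1 / (t - 1), -Complex.I * (1 / (t - 1)) * x
    - Complex.I * d₁ / (2 * (1 / (t - 1))))).hasFDerivAt.comp_hasDerivAt (f := fun t : ℂ =>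
      ((1 / (t - 1), -Complex.I * (1 / (t - 1)) * x
        - Complex.I * d₁ / (2 * (1 / (t - 1)))) : ℂ × ℂ)) t (hy.prodMk hzt)
  rw [hfd] at hwt
  have hev : (fun s => u s x) =ᶠ[nhds t] _ :=
    (isOpen_ne.eventually_mem ht).mono fun s hs => hu s x hs
  have hut := (((hdy d₁).sub (hzt.const_mul Complex.I)).sub
    ((hy.const_mul Complex.I).mul hwt)).congr_of_eventuallyEq hev
  have e1 : cdt u t x = _ := hut.deriv
  have e2 : cdx u 1 t x = _ := (congrFun iteratedDeriv_one x).trans (hux x).deriv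
  have e3 : cdx u 2 t x = _ :=
    (congrFun (iteratedDeriv_succ.trans (congrArg deriv iteratedDeriv_one)) x).trans huxx.deriv
  rw [e1, e2, e3, hu t x ht, hweq]
  simp only [cdx, iteratedDeriv_succ, iteratedDeriv_zero, Function.comp]
  have hI : d₁ / (1 / (t - 1)) = d₁ * (t - 1) := by simp
  have hI2 : Complex.I * d₁ / (2 * (1 / (t - 1))) = Complex.I * d₁ * (t - 1) / 2 := by
    field_simp
  have hyT : 1 / (t - 1) * (t - 1) = 1 := by field_simp
  rw [hI, hI2]
  generalize deriv (deriv (w (1 / (t - 1)))) _ = W2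
  generalize deriv (w (1 / (t - 1))) _ = W1
  generalize w (1 / (t - 1)) _ = W
  generalize 1 / (t - 1) = y at *
  generalize t - 1 = T at *
  have hU : d₁ * T - Complex.I * (-Complex.I * y * x - Complex.I * d₁ * T / 2) - Complex.I * y * W
      = d₁ * T / 2 - y * x - Complex.I * y * W := by
    linear_combination (y * x + d₁ * T / 2) * Complex.I_sq
  rw [hU]
  linear_combination (d₁ / 2 * (1 + y * W1)) * hyT +
    (-(y ^ 2 * x - d₁ / 2) - y * W1 * (y ^ 2 * x - d₁ / 2)) * Complex.I_sq
end

section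
/- Let u : ℝ × ℝ → ℝ be smooth with u(t,x) ≠ 0 for all (t,x) and satisfying u_t = u²·u_xx at every point. Let f, g : ℝ × ℝ → ℝ be smooth functions such that: (i) f_t = u²·f_xx + 2u·u_xx·f at every point (f is a symmetry characteristic of u_t = u²u_xx), (ii) g_x = f/u² at every point, and (iii) g_t = f_x at every point. Then the function h := u·f_x + u²·u_xx·g satisfies h_t = u²·h_xx + 2u·u_xx·h at every point; that is, h is again a symmetry characteristic. -/
def Sm (w : ℝ → ℝ → ℝ) : Prop := ContDiff ℝ (⊤ : ℕ∞) fun p : ℝ × ℝ => w p.1 p.2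

lemma Sm.hdx' {w : ℝ → ℝ → ℝ} (hw : Sm w) (t x : ℝ) :
    HasDerivAt (w t) (fderiv ℝ (fun p : ℝ × ℝ => w p.1 p.2) (t, x) (0, 1)) x := by
  have h1 : HasFDerivAt (fun p : ℝ × ℝ => w p.1 p.2) _ (t, x) :=
    ((ContDiff.differentiable hw (by simp)) (t, x)).hasFDerivAt
  have h2 : HasDerivAt (fun y : ℝ => ((t, y) : ℝ × ℝ)) (0, 1) x :=
    (hasDerivAt_const x t).prodMk (hasDerivAt_id x)
  exact h1.comp_hasDerivAt x h2

lemma Sm.hdt' {w : ℝ → ℝ → ℝ} (hw : Sm w) (t x : ℝ) :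
    HasDerivAt (fun s => w s x) (fderiv ℝ (fun p : ℝ × ℝ => w p.1 p.2) (t, x) (1, 0)) t := by
  have h1 : HasFDerivAt (fun p : ℝ × ℝ => w p.1 p.2) _ (t, x) :=
    ((ContDiff.differentiable hw (by simp)) (t, x)).hasFDerivAt
  have h2 : HasDerivAt (fun y : ℝ => ((y, x) : ℝ × ℝ)) (1, 0) t :=
    (hasDerivAt_id t).prodMk (hasDerivAt_const t x)
  exact h1.comp_hasDerivAt t h2

lemma dx_of_hasDerivAt {w : ℝ → ℝ → ℝ} {t x a : ℝ} (h : HasDerivAt (w t) a x) :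
    dx w 1 t x = a := by
  simp only [dx, iteratedDeriv_one]; exact h.deriv

lemma dt_of_hasDerivAt {w : ℝ → ℝ → ℝ} {t x a : ℝ} (h : HasDerivAt (fun s => w s x) a t) :
    dt w t x = a := h.deriv

lemma Sm.dx_eq {w : ℝ → ℝ → ℝ} (hw : Sm w) (t x : ℝ) :
    dx w 1 t x = fderiv ℝ (fun p : ℝ × ℝ => w p.1 p.2) (t, x) (0, 1) :=
  dx_of_hasDerivAt (hw.hdx' t x)

lemma Sm.dt_eq {w : ℝ → ℝ → ℝ} (hw : Sm w) (t x : ℝ) :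
    dt w t x = fderiv ℝ (fun p : ℝ × ℝ => w p.1 p.2) (t, x) (1, 0) :=
  dt_of_hasDerivAt (hw.hdt' t x)

lemma Sm.hdx {w : ℝ → ℝ → ℝ} (hw : Sm w) (t x : ℝ) : HasDerivAt (w t) (dx w 1 t x) x := by
  rw [hw.dx_eq]; exact hw.hdx' t x

lemma Sm.hdt {w : ℝ → ℝ → ℝ} (hw : Sm w) (t x : ℝ) :
    HasDerivAt (fun s => w s x) (dt w t x) t := by
  rw [hw.dt_eq]; exact hw.hdt' t x

lemma Sm.fd {w : ℝ → ℝ → ℝ} (hw : Sm w) :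
    ContDiff ℝ (⊤ : ℕ∞) (fderiv ℝ (fun p : ℝ × ℝ => w p.1 p.2)) :=
  ContDiff.fderiv_right hw (by simp)

lemma Sm.dx {w : ℝ → ℝ → ℝ} (hw : Sm w) : Sm (dx w 1) := by
  unfold Sm
  simp only [hw.dx_eq]
  exact hw.fd.clm_apply contDiff_const

lemma Sm.dt {w : ℝ → ℝ → ℝ} (hw : Sm w) : Sm (dt w) := by
  unfold Sm
  simp only [hw.dt_eq]
  exact hw.fd.clm_apply contDiff_const

lemma Sm.comm {w : ℝ → ℝ → ℝ} (hw : Sm w) (t x : ℝ) :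
    _root_.dt (_root_.dx w 1) t x = _root_.dx (_root_.dt w) 1 t x := by
  have hd : DifferentiableAt ℝ (fderiv ℝ (fun p : ℝ × ℝ => w p.1 p.2)) (t, x) :=
    hw.fd.differentiable (by simp) _
  have hs : IsSymmSndFDerivAt ℝ (fun p : ℝ × ℝ => w p.1 p.2) (t, x) := by
    apply (ContDiff.contDiffAt hw).isSymmSndFDerivAt
    simp only [minSmoothness_of_isRCLikeNormedField]
    exact WithTop.coe_le_coe.2 (le_top : (2 : ℕ∞) ≤ ⊤)
  rw [hw.dx.dt_eq, hw.dt.dx_eq]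
  simp only [hw.dx_eq, hw.dt_eq]
  rw [fderiv_clm_apply hd (by fun_prop), fderiv_clm_apply hd (by fun_prop)]
  simpa using hs.eq (1, 0) (0, 1)

lemma dx_two (w : ℝ → ℝ → ℝ) : dx w 2 = dx (dx w 1) 1 := by
  funext t x
  simp only [dx]
  rw [show (2:ℕ) = 1 + 1 from rfl, iteratedDeriv_succ, iteratedDeriv_one, iteratedDeriv_one]
  congr 1
  funext y
  simp only [dx, iteratedDeriv_one]

theorem stmt_10 (u : ℝ → ℝ → ℝ) (hu : ContDiff ℝ (⊤ : ℕ∞) fun p : ℝ × ℝ => u p.1 p.2)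
    (hne : ∀ t x, u t x ≠ 0)
    (hueq : ∀ t x, dt u t x = (u t x) ^ 2 * dx u 2 t x)
    (f g : ℝ → ℝ → ℝ)
    (hf : ContDiff ℝ (⊤ : ℕ∞) fun p : ℝ × ℝ => f p.1 p.2)
    (hg : ContDiff ℝ (⊤ : ℕ∞) fun p : ℝ × ℝ => g p.1 p.2)
    (hfeq : ∀ t x, dt f t x = (u t x) ^ 2 * dx f 2 t x + 2 * u t x * dx u 2 t x * f t x)
    (hgx : ∀ t x, dx g 1 t x = f t x / (u t x) ^ 2)
    (hgt : ∀ t x, dt g t x = dx f 1 t x)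
    (h : ℝ → ℝ → ℝ)
    (hh : ∀ t x, h t x = u t x * dx f 1 t x + (u t x) ^ 2 * dx u 2 t x * g t x) :
    ∀ t x, dt h t x = (u t x) ^ 2 * dx h 2 t x + 2 * u t x * dx u 2 t x * h t x := by
  intro t x
  rw [dx_two h]
  simp only [dx_two u, dx_two f] at *
  have su : Sm u := hu
  have sf : Sm f := hf
  have sg : Sm g := hg
  obtain ⟨u1, hu1⟩ : ∃ w, w = dx u 1 := ⟨_, rfl⟩
  have su1 : Sm u1 := hu1 ▸ su.dx
  obtain ⟨u2, hu2⟩ : ∃ w, w = dx u1 1 := ⟨_, rfl⟩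
  have su2 : Sm u2 := hu2 ▸ su1.dx
  obtain ⟨u3, hu3⟩ : ∃ w, w = dx u2 1 := ⟨_, rfl⟩
  have su3 : Sm u3 := hu3 ▸ su2.dx
  obtain ⟨f1, hf1⟩ : ∃ w, w = dx f 1 := ⟨_, rfl⟩
  have sf1 : Sm f1 := hf1 ▸ sf.dx
  obtain ⟨f2, hf2⟩ : ∃ w, w = dx f1 1 := ⟨_, rfl⟩
  have sf2 : Sm f2 := hf2 ▸ sf1.dx
  simp only [← hu1, ← hu2, ← hf1, ← hf2] at hueq hfeq hgt hh ⊢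
  -- x-derivatives
  have xu : ∀ t x, HasDerivAt (u t) (u1 t x) x := by rw [hu1]; exact su.hdx
  have xu1 : ∀ t x, HasDerivAt (u1 t) (u2 t x) x := by rw [hu2]; exact su1.hdx
  have xu2 : ∀ t x, HasDerivAt (u2 t) (u3 t x) x := by rw [hu3]; exact su2.hdx
  have xu3 := su3.hdx
  have xf : ∀ t x, HasDerivAt (f t) (f1 t x) x := by rw [hf1]; exact sf.hdx
  have xf1 : ∀ t x, HasDerivAt (f1 t) (f2 t x) x := by rw [hf2]; exact sf1.hdx
  have xf2 := sf2.hdx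
  have xg : ∀ t x, HasDerivAt (g t) (f t x / (u t x) ^ 2) x := by
    intro t x; rw [← hgx]; exact sg.hdx t x
  -- t-derivatives
  have tu : ∀ t x, HasDerivAt (fun s => u s x) ((u t x) ^ 2 * u2 t x) t := by
    intro t x; rw [← hueq]; exact su.hdt t x
  have tg : ∀ t x, HasDerivAt (fun s => g s x) (f1 t x) t := by
    intro t x; rw [← hgt]; exact sg.hdt t x
  have eu : dt u = fun t x => (u t x) ^ 2 * u2 t x := by funext t x; exact hueq t x
  have ef : dt f = fun t x => (u t x) ^ 2 * f2 t x + 2 * u t x * u2 t x * f t x := by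
    funext t x; exact hfeq t x
  have eu1 : dt u1 = fun t x => 2 * u t x * u1 t x * u2 t x + (u t x) ^ 2 * u3 t x := by
    funext t x
    rw [hu1, su.comm, eu]
    refine dx_of_hasDerivAt ((((xu t x).pow 2).mul (xu2 t x)).congr_deriv ?_)
    simp [hu1]
  have eu2 : dt u2 t x = 2 * u1 t x * u1 t x * u2 t x + 2 * u t x * u2 t x * u2 t x
      + 2 * u t x * u1 t x * u3 t x + 2 * u t x * u1 t x * u3 t x
      + (u t x) ^ 2 * dx u3 1 t x := by
    rw [hu2, su1.comm, eu1]
    rw [← hu2]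
    refine dx_of_hasDerivAt ((((((xu t x).const_mul 2).mul (xu1 t x)).mul (xu2 t x)).add
      (((xu t x).pow 2).mul (xu3 t x))).congr_deriv ?_)
    simp; ring
  have ef1 : dt f1 t x = 2 * u t x * u1 t x * f2 t x + (u t x) ^ 2 * dx f2 1 t x
      + 2 * u1 t x * u2 t x * f t x + 2 * u t x * u3 t x * f t x
      + 2 * u t x * u2 t x * f1 t x := by
    rw [hf1, sf.comm, ef]
    rw [← hf1]
    refine dx_of_hasDerivAt (((((xu t x).pow 2).mul (xf2 t x)).add
      ((((xu t x).const_mul 2).mul (xu2 t x)).mul (xf t x))).congr_deriv ?_)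
    simp; ring
  have eh : h = fun t x => u t x * f1 t x + (u t x) ^ 2 * u2 t x * g t x := by
    funext t x; exact hh t x
  have eht : dt h t x = (u t x) ^ 2 * u2 t x * f1 t x + u t x * dt f1 t x
      + (2 * u t x * ((u t x) ^ 2 * u2 t x) * u2 t x + (u t x) ^ 2 * dt u2 t x) * g t x
      + (u t x) ^ 2 * u2 t x * f1 t x := by
    rw [eh]
    refine dt_of_hasDerivAt ((((tu t x).mul (sf1.hdt t x)).add
      ((((tu t x).pow 2).mul (su2.hdt t x)).mul (tg t x))).congr_deriv ?_)
    simp; ring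
  have ehx : dx h 1 = fun t x => u1 t x * f1 t x + u t x * f2 t x
      + (2 * u t x * u1 t x * u2 t x + (u t x) ^ 2 * u3 t x) * g t x + u2 t x * f t x := by
    funext t x
    rw [eh]
    refine dx_of_hasDerivAt ((((xu t x).mul (xf1 t x)).add
      ((((xu t x).pow 2).mul (xu2 t x)).mul (xg t x))).congr_deriv ?_)
    have := hne t x
    simp; field_simp; ring
  have ehxx : dx (dx h 1) 1 t x = u2 t x * f1 t x + 2 * u1 t x * f2 t x + u t x * dx f2 1 t x
      + (2 * u1 t x * u1 t x * u2 t x + 2 * u t x * u2 t x * u2 t x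
      + 4 * u t x * u1 t x * u3 t x + (u t x) ^ 2 * dx u3 1 t x) * g t x
      + (2 * u t x * u1 t x * u2 t x + (u t x) ^ 2 * u3 t x) * (f t x / (u t x) ^ 2)
      + u3 t x * f t x + u2 t x * f1 t x := by
    rw [ehx]
    refine dx_of_hasDerivAt ((((((xu1 t x).mul (xf1 t x)).add ((xu t x).mul (xf2 t x))).add
      ((((((xu t x).const_mul 2).mul (xu1 t x)).mul (xu2 t x)).add
      (((xu t x).pow 2).mul (xu3 t x))).mul (xg t x))).add
      ((xu2 t x).mul (xf t x))).congr_deriv ?_)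
    simp; ring
  rw [eht, ehxx, ef1, eu2, hh]
  have := hne t x
  field_simp
  ring
end

section
/- Let u : ℝ × ℝ → ℝ be smooth and satisfy u_t = u²·(1 + u_xx) at every point. Then the function Q(t,x) := (1/2)·u²·[2u²·u_xxxx + 2u·(3 + 7u_xx + 4u_xx² + 6u_x·u_xxx + 2x·u_xxx) + (1 + u_xx)·(14u_x² + 12x·u_x + 3x²)] satisfies Q_t = u²·Q_xx + 2u·(1 + u_xx)·Q at every point; that is, Q is a fourth-order generalized symmetry characteristic of u_t = u²(1 + u_xx). -/
lemma sm_slice_x (w : ℝ × ℝ → ℝ) (hw : ContDiff ℝ (⊤ : ℕ∞) w) (t x : ℝ) :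
    HasDerivAt (fun y => w (t, y)) (fderiv ℝ w (t, x) (0, 1)) x := by
  have h1 : HasFDerivAt w (fderiv ℝ w (t, x)) (t, x) :=
    (hw.differentiable (by simp) (t, x)).hasFDerivAt
  have h2 : HasDerivAt (fun y : ℝ => ((t, y) : ℝ × ℝ)) (0, 1) x :=
    (hasDerivAt_const x t).prodMk (hasDerivAt_id x)
  exact h1.comp_hasDerivAt x h2

lemma sm_slice_t (w : ℝ × ℝ → ℝ) (hw : ContDiff ℝ (⊤ : ℕ∞) w) (t x : ℝ) :
    HasDerivAt (fun s => w (s, x)) (fderiv ℝ w (t, x) (1, 0)) t := by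
  have h1 : HasFDerivAt w (fderiv ℝ w (t, x)) (t, x) :=
    (hw.differentiable (by simp) (t, x)).hasFDerivAt
  have h2 : HasDerivAt (fun s : ℝ => ((s, x) : ℝ × ℝ)) (1, 0) t :=
    (hasDerivAt_id t).prodMk (hasDerivAt_const t x)
  exact h1.comp_hasDerivAt t h2

lemma sm_fderiv (w : ℝ × ℝ → ℝ) (hw : ContDiff ℝ (⊤ : ℕ∞) w) (v : ℝ × ℝ) :
    ContDiff ℝ (⊤ : ℕ∞) (fun p => fderiv ℝ w p v) :=
  (hw.fderiv_right (m := (⊤ : ℕ∞)) (by simp)).clm_apply contDiff_const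

lemma sm_fderiv_fderiv (w : ℝ × ℝ → ℝ) (hw : ContDiff ℝ (⊤ : ℕ∞) w) (a v p : ℝ × ℝ) :
    fderiv ℝ (fun p => fderiv ℝ w p v) p a = fderiv ℝ (fderiv ℝ w) p a v := by
  have h : DifferentiableAt ℝ (fderiv ℝ w) p :=
    (hw.fderiv_right (m := (⊤ : ℕ∞)) (by simp)).differentiable (by simp) p
  have := (h.hasFDerivAt.clm_apply (hasFDerivAt_const v p)).fderiv
  rw [this]; simp

lemma sm_comm (w : ℝ × ℝ → ℝ) (hw : ContDiff ℝ (⊤ : ℕ∞) w) (p : ℝ × ℝ) :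
    fderiv ℝ (fun p => fderiv ℝ w p (0, 1)) p (1, 0)
      = fderiv ℝ (fun p => fderiv ℝ w p (1, 0)) p (0, 1) := by
  rw [sm_fderiv_fderiv w hw, sm_fderiv_fderiv w hw]
  have h : IsSymmSndFDerivAt ℝ w p := (hw.contDiffAt).isSymmSndFDerivAt (by
    simp only [minSmoothness_of_isRCLikeNormedField]
    exact WithTop.coe_le_coe.2 le_top)
  exact h _ _

lemma dx_smooth (u : ℝ → ℝ → ℝ) (hu : ContDiff ℝ (⊤ : ℕ∞) fun p : ℝ × ℝ => u p.1 p.2) (n : ℕ) :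
    ContDiff ℝ (⊤ : ℕ∞) fun p : ℝ × ℝ => dx u n p.1 p.2 := by
  induction n with
  | zero => simpa [dx] using hu
  | succ n ih =>
    have : (fun p : ℝ × ℝ => dx u (n+1) p.1 p.2)
        = fun p => fderiv ℝ (fun p : ℝ × ℝ => dx u n p.1 p.2) p (0, 1) := by
      funext p
      have := (sm_slice_x _ ih p.1 p.2).deriv
      simp only [dx, iteratedDeriv_succ] at this ⊢
      exact this
    rw [this]
    exact sm_fderiv _ ih _

lemma dx_fd (u : ℝ → ℝ → ℝ) (hu : ContDiff ℝ (⊤ : ℕ∞) fun p : ℝ × ℝ => u p.1 p.2) (n : ℕ)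
    (t x : ℝ) : dx u (n+1) t x = fderiv ℝ (fun p : ℝ × ℝ => dx u n p.1 p.2) (t, x) (0, 1) := by
  have := (sm_slice_x _ (dx_smooth u hu n) t x).deriv
  simp only [dx, iteratedDeriv_succ] at this ⊢
  exact this

lemma dx_hasDeriv (u : ℝ → ℝ → ℝ) (hu : ContDiff ℝ (⊤ : ℕ∞) fun p : ℝ × ℝ => u p.1 p.2) (n : ℕ)
    (t x : ℝ) : HasDerivAt (fun y => dx u n t y) (dx u (n+1) t x) x := by
  rw [dx_fd u hu]
  exact sm_slice_x _ (dx_smooth u hu n) t x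

lemma dt_step (u : ℝ → ℝ → ℝ) (hu : ContDiff ℝ (⊤ : ℕ∞) fun p : ℝ × ℝ => u p.1 p.2) (n : ℕ)
    (g g' : ℝ → ℝ → ℝ) (h : ∀ t x, HasDerivAt (fun s => dx u n s x) (g t x) t)
    (hg : ∀ t x, HasDerivAt (fun y => g t y) (g' t x) x) (t x : ℝ) :
    HasDerivAt (fun s => dx u (n+1) s x) (g' t x) t := by
  have hs := dx_smooth u hu n
  have e : (fun p : ℝ × ℝ => fderiv ℝ (fun p : ℝ × ℝ => dx u n p.1 p.2) p (1, 0))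
      = fun p => g p.1 p.2 := by
    funext p
    exact (sm_slice_t _ hs p.1 p.2).unique (h p.1 p.2)
  have e2 := sm_comm _ hs (t, x)
  have h3 := sm_slice_x _ (sm_fderiv _ hs (1, 0)) t x
  have h4 := sm_slice_t _ (sm_fderiv _ hs (0, 1)) t x
  rw [e2] at h4
  have h5 : fderiv ℝ (fun p => fderiv ℝ (fun p : ℝ × ℝ => dx u n p.1 p.2) p (1, 0)) (t, x) (0, 1)
      = g' t x := by
    refine h3.unique ?_
    have := hg t x
    have e' : (fun y => fderiv ℝ (fun p : ℝ × ℝ => dx u n p.1 p.2) (t, y) (1, 0))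
      = fun y => g t y := by
      funext y
      exact congrFun e (t, y)
    rw [e']; exact this
  rw [h5] at h4
  have e6 : (fun s => dx u (n+1) s x)
    = fun s => fderiv ℝ (fun p : ℝ × ℝ => dx u n p.1 p.2) (s, x) (0, 1) := by
    funext s; exact dx_fd u hu n s x
  rw [e6]; exact h4

theorem stmt_15 (u : ℝ → ℝ → ℝ) (hu : ContDiff ℝ (⊤ : ℕ∞) fun p : ℝ × ℝ => u p.1 p.2)
    (heq : ∀ t x, dt u t x = (u t x) ^ 2 * (1 + dx u 2 t x))
    (Q : ℝ → ℝ → ℝ)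
    (hQ : ∀ t x, Q t x = (1 / 2) * (u t x) ^ 2 *
      (2 * (u t x) ^ 2 * dx u 4 t x
        + 2 * u t x * (3 + 7 * dx u 2 t x + 4 * (dx u 2 t x) ^ 2
            + 6 * dx u 1 t x * dx u 3 t x + 2 * x * dx u 3 t x)
        + (1 + dx u 2 t x) * (14 * (dx u 1 t x) ^ 2 + 12 * x * dx u 1 t x + 3 * x ^ 2))) :
    ∀ t x, dt Q t x = (u t x) ^ 2 * dx Q 2 t x + 2 * u t x * (1 + dx u 2 t x) * Q t x := by
  
  have H0 : ∀ t x, dx u 0 t x = u t x := fun t x => by simp [dx]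
  simp only [← H0] at heq hQ ⊢
  have T0 : ∀ t x, HasDerivAt (fun s => dx u 0 s x) (((dx u 0 t x) ^ 2 * (1 + dx u 2 t x))) t := by
    intro t x
    have h := sm_slice_t _ (dx_smooth u hu 0) t x
    have h' := h.deriv
    rw [← heq]
    unfold dt
    simp only [← H0] at h h' ⊢
    rw [h']; exact h
  have T1 : ∀ t x, HasDerivAt (fun s => dx u 1 s x) (((((2 * dx u 0 t x) * dx u 1 t x) * (1 + dx u 2 t x)) + ((dx u 0 t x) ^ 2 * dx u 3 t x))) t := by
    refine dt_step u hu 0 _ (fun t x => ((((2 * dx u 0 t x) * dx u 1 t x) * (1 + dx u 2 t x)) + ((dx u 0 t x) ^ 2 * dx u 3 t x))) T0 ?_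
    intro t x
    have h := fun n => dx_hasDeriv u hu n t x
    exact HasDerivAt.congr_deriv (((h 0).fun_pow 2).fun_mul ((h 2).const_add 1)) (by push_cast; ring)
  have T2 : ∀ t x, HasDerivAt (fun s => dx u 2 s x) ((((((2 * (dx u 1 t x) ^ 2) * (1 + dx u 2 t x)) + (((2 * dx u 0 t x) * dx u 2 t x) * (1 + dx u 2 t x))) + (((4 * dx u 0 t x) * dx u 1 t x) * dx u 3 t x)) + ((dx u 0 t x) ^ 2 * dx u 4 t x))) t := by
    refine dt_step u hu 1 _ (fun t x => (((((2 * (dx u 1 t x) ^ 2) * (1 + dx u 2 t x)) + (((2 * dx u 0 t x) * dx u 2 t x) * (1 + dx u 2 t x))) + (((4 * dx u 0 t x) * dx u 1 t x) * dx u 3 t x)) + ((dx u 0 t x) ^ 2 * dx u 4 t x))) T1 ?_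
    intro t x
    have h := fun n => dx_hasDeriv u hu n t x
    exact HasDerivAt.congr_deriv (((((h 0).const_mul 2).fun_mul (h 1)).fun_mul ((h 2).const_add 1)).fun_add (((h 0).fun_pow 2).fun_mul (h 3))) (by push_cast; ring)
  have T3 : ∀ t x, HasDerivAt (fun s => dx u 3 s x) (((((((((6 * dx u 1 t x) * dx u 2 t x) * (1 + dx u 2 t x)) + ((6 * (dx u 1 t x) ^ 2) * dx u 3 t x)) + (((2 * dx u 0 t x) * dx u 3 t x) * (1 + dx u 2 t x))) + (((6 * dx u 0 t x) * dx u 2 t x) * dx u 3 t x)) + (((6 * dx u 0 t x) * dx u 1 t x) * dx u 4 t x)) + ((dx u 0 t x) ^ 2 * dx u 5 t x))) t := by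
    refine dt_step u hu 2 _ (fun t x => ((((((((6 * dx u 1 t x) * dx u 2 t x) * (1 + dx u 2 t x)) + ((6 * (dx u 1 t x) ^ 2) * dx u 3 t x)) + (((2 * dx u 0 t x) * dx u 3 t x) * (1 + dx u 2 t x))) + (((6 * dx u 0 t x) * dx u 2 t x) * dx u 3 t x)) + (((6 * dx u 0 t x) * dx u 1 t x) * dx u 4 t x)) + ((dx u 0 t x) ^ 2 * dx u 5 t x))) T2 ?_
    intro t x
    have h := fun n => dx_hasDeriv u hu n t x
    exact HasDerivAt.congr_deriv (((((((h 1).fun_pow 2).const_mul 2).fun_mul ((h 2).const_add 1)).fun_add ((((h 0).const_mul 2).fun_mul (h 2)).fun_mul ((h 2).const_add 1))).fun_add ((((h 0).const_mul 4).fun_mul (h 1)).fun_mul (h 3))).fun_add (((h 0).fun_pow 2).fun_mul (h 4))) (by push_cast; ring)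
  have T4 : ∀ t x, HasDerivAt (fun s => dx u 4 s x) (((((((((((6 * (dx u 2 t x) ^ 2) * (1 + dx u 2 t x)) + (((8 * dx u 1 t x) * dx u 3 t x) * (1 + dx u 2 t x))) + (((24 * dx u 1 t x) * dx u 2 t x) * dx u 3 t x)) + ((12 * (dx u 1 t x) ^ 2) * dx u 4 t x)) + (((2 * dx u 0 t x) * dx u 4 t x) * (1 + dx u 2 t x))) + ((8 * dx u 0 t x) * (dx u 3 t x) ^ 2)) + (((12 * dx u 0 t x) * dx u 2 t x) * dx u 4 t x)) + (((8 * dx u 0 t x) * dx u 1 t x) * dx u 5 t x)) + ((dx u 0 t x) ^ 2 * dx u 6 t x))) t := by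
    refine dt_step u hu 3 _ (fun t x => ((((((((((6 * (dx u 2 t x) ^ 2) * (1 + dx u 2 t x)) + (((8 * dx u 1 t x) * dx u 3 t x) * (1 + dx u 2 t x))) + (((24 * dx u 1 t x) * dx u 2 t x) * dx u 3 t x)) + ((12 * (dx u 1 t x) ^ 2) * dx u 4 t x)) + (((2 * dx u 0 t x) * dx u 4 t x) * (1 + dx u 2 t x))) + ((8 * dx u 0 t x) * (dx u 3 t x) ^ 2)) + (((12 * dx u 0 t x) * dx u 2 t x) * dx u 4 t x)) + (((8 * dx u 0 t x) * dx u 1 t x) * dx u 5 t x)) + ((dx u 0 t x) ^ 2 * dx u 6 t x))) T3 ?_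
    intro t x
    have h := fun n => dx_hasDeriv u hu n t x
    exact HasDerivAt.congr_deriv (((((((((h 1).const_mul 6).fun_mul (h 2)).fun_mul ((h 2).const_add 1)).fun_add ((((h 1).fun_pow 2).const_mul 6).fun_mul (h 3))).fun_add ((((h 0).const_mul 2).fun_mul (h 3)).fun_mul ((h 2).const_add 1))).fun_add ((((h 0).const_mul 6).fun_mul (h 2)).fun_mul (h 3))).fun_add ((((h 0).const_mul 6).fun_mul (h 1)).fun_mul (h 4))).fun_add (((h 0).fun_pow 2).fun_mul (h 5))) (by push_cast; ring)
  have hQf := funext fun t => funext fun x => hQ t x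
  have QX : ∀ t x, HasDerivAt (fun y => Q t y) (((((((((4 * (dx u 0 t x) ^ 3) * dx u 1 t x) * dx u 4 t x) + ((dx u 0 t x) ^ 4 * dx u 5 t x)) + (((3 * (dx u 0 t x) ^ 2) * dx u 1 t x) * ((((3 + (7 * dx u 2 t x)) + (4 * (dx u 2 t x) ^ 2)) + ((6 * dx u 1 t x) * dx u 3 t x)) + ((2 * x) * dx u 3 t x)))) + ((dx u 0 t x) ^ 3 * ((((9 * dx u 3 t x) + ((14 * dx u 2 t x) * dx u 3 t x)) + ((6 * dx u 1 t x) * dx u 4 t x)) + ((2 * x) * dx u 4 t x)))) + (((dx u 0 t x * dx u 1 t x) * (1 + dx u 2 t x)) * (((14 * (dx u 1 t x) ^ 2) + ((12 * x) * dx u 1 t x)) + (3 * (x) ^ 2)))) + ((1 / 2 * (dx u 0 t x) ^ 2) * ((dx u 3 t x * (((14 * (dx u 1 t x) ^ 2) + ((12 * x) * dx u 1 t x)) + (3 * (x) ^ 2))) + ((1 + dx u 2 t x) * (((((28 * dx u 1 t x) * dx u 2 t x) + (12 * dx u 1 t x)) + ((12 * x) * dx u 2 t x)) + (6 * x)))))))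 x := by
    intro t x
    have h := fun n => dx_hasDeriv u hu n t x
    have hx := hasDerivAt_id' x
    rw [hQf]
    exact HasDerivAt.congr_deriv ((((h 0).fun_pow 2).const_mul (1 / 2)).fun_mul ((((((h 0).fun_pow 2).const_mul 2).fun_mul (h 4)).fun_add (((h 0).const_mul 2).fun_mul ((((((h 2).const_mul 7).const_add 3).fun_add (((h 2).fun_pow 2).const_mul 4)).fun_add (((h 1).const_mul 6).fun_mul (h 3))).fun_add ((hx.const_mul 2).fun_mul (h 3))))).fun_add (((h 2).const_add 1).fun_mul (((((h 1).fun_pow 2).const_mul 14).fun_add ((hx.const_mul 12).fun_mul (h 1))).fun_add ((hx.fun_pow 2).const_mul 3))))) (by push_cast; ring)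
  intro t x
  -- second space derivative of the characteristic
  have E2 : dx Q 2 t x = ((((((((((((((((((12 * (dx u 0 t x) ^ 2) * (dx u 1 t x) ^ 2) * dx u 4 t x) + (((4 * (dx u 0 t x) ^ 3) * dx u 2 t x) * dx u 4 t x)) + (((4 * (dx u 0 t x) ^ 3) * dx u 1 t x) * dx u 5 t x)) + (((4 * (dx u 0 t x) ^ 3) * dx u 1 t x) * dx u 5 t x)) + ((dx u 0 t x) ^ 4 * dx u 6 t x)) + (((6 * dx u 0 t x) * (dx u 1 t x) ^ 2) * ((((3 + (7 * dx u 2 t x)) + (4 * (dx u 2 t x) ^ 2)) + ((6 * dx u 1 t x) * dx u 3 t x)) + ((2 * x) * dx u 3 t x)))) + (((3 * (dx u 0 t x) ^ 2) * dx u 2 t x) * ((((3 + (7 * dx u 2 t x)) + (4 * (dx u 2 t x) ^ 2)) + ((6 * dx u 1 t x) * dx u 3 t x)) + ((2 * x) * dx u 3 t x)))) + (((3 * (dx u 0 t x) ^ 2) * dx u 1 t x) * ((((9 * dx u 3 t x) + ((14 * dx u 2 t x) * dx u 3 t x)) + ((6 * dx u 1 t x) * dx u 4 t x)) + ((2 *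 x) * dx u 4 t x)))) + (((3 * (dx u 0 t x) ^ 2) * dx u 1 t x) * ((((9 * dx u 3 t x) + ((14 * dx u 2 t x) * dx u 3 t x)) + ((6 * dx u 1 t x) * dx u 4 t x)) + ((2 * x) * dx u 4 t x)))) + ((dx u 0 t x) ^ 3 * (((((11 * dx u 4 t x) + (14 * (dx u 3 t x) ^ 2)) + ((20 * dx u 2 t x) * dx u 4 t x)) + ((6 * dx u 1 t x) * dx u 5 t x)) + ((2 * x) * dx u 5 t x)))) + (((dx u 1 t x * dx u 1 t x) * (1 + dx u 2 t x)) * (((14 * (dx u 1 t x) ^ 2) + ((12 * x) * dx u 1 t x)) + (3 * (x) ^ 2)))) + (((dx u 0 t x * dx u 2 t x) * (1 + dx u 2 t x)) * (((14 * (dx u 1 t x) ^ 2) + ((12 * x) * dx u 1 t x)) + (3 * (x) ^ 2)))) + (((dx u 0 t x * dx u 1 t x) * dx u 3 t x) * (((14 * (dx u 1 t x) ^ 2) + ((12 * x) * dx u 1 t x)) + (3 * (x) ^ 2)))) + (((dx u 0 t x * dx u 1 t x) * (1 + dx u 2 t x)) * (((((28 * dx u 1 t x) * dx u 2 t x) +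 (12 * dx u 1 t x)) + ((12 * x) * dx u 2 t x)) + (6 * x)))) + ((dx u 0 t x * dx u 1 t x) * ((dx u 3 t x * (((14 * (dx u 1 t x) ^ 2) + ((12 * x) * dx u 1 t x)) + (3 * (x) ^ 2))) + ((1 + dx u 2 t x) * (((((28 * dx u 1 t x) * dx u 2 t x) + (12 * dx u 1 t x)) + ((12 * x) * dx u 2 t x)) + (6 * x)))))) + ((1 / 2 * (dx u 0 t x) ^ 2) * (((dx u 4 t x * (((14 * (dx u 1 t x) ^ 2) + ((12 * x) * dx u 1 t x)) + (3 * (x) ^ 2))) + (2 * (dx u 3 t x * (((((28 * dx u 1 t x) * dx u 2 t x) + (12 * dx u 1 t x)) + ((12 * x) * dx u 2 t x)) + (6 * x))))) + ((1 + dx u 2 t x) * (((((28 * (dx u 2 t x) ^ 2) + ((28 * dx u 1 t x) * dx u 3 t x)) + (24 * dx u 2 t x)) + ((12 * x) * dx u 3 t x)) + 6))))) := by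
    have e2 : dx Q 2 t x = deriv (deriv (Q t)) x := by
      simp only [dx, iteratedDeriv_succ, iteratedDeriv_zero]
    rw [e2, funext fun y => (QX t y).deriv]
    have h := fun n => dx_hasDeriv u hu n t x
    have hx := hasDerivAt_id' x
    refine HasDerivAt.deriv (HasDerivAt.congr_deriv ((((((((((h 0).fun_pow 3).const_mul 4).fun_mul (h 1)).fun_mul (h 4)).fun_add (((h 0).fun_pow 4).fun_mul (h 5))).fun_add (((((h 0).fun_pow 2).const_mul 3).fun_mul (h 1)).fun_mul ((((((h 2).const_mul 7).const_add 3).fun_add (((h 2).fun_pow 2).const_mul 4)).fun_add (((h 1).const_mul 6).fun_mul (h 3))).fun_add ((hx.const_mul 2).fun_mul (h 3))))).fun_add (((h 0).fun_pow 3).fun_mul (((((h 3).const_mul 9).fun_add (((h 2).const_mul 14).fun_mul (h 3))).fun_add (((h 1).const_mul 6).fun_mul (h 4))).fun_add ((hx.const_mul 2).fun_mul (h 4))))).fun_add ((((h 0).fun_mul (h 1)).fun_mul ((h 2).const_add 1)).fun_mul (((((h 1).fun_pow 2).const_mul 14).fun_add ((hx.const_mul 12).fun_mul (h 1))).fun_add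 ((hx.fun_pow 2).const_mul 3)))).fun_add ((((h 0).fun_pow 2).const_mul (1 / 2)).fun_mul (((h 3).fun_mul (((((h 1).fun_pow 2).const_mul 14).fun_add ((hx.const_mul 12).fun_mul (h 1))).fun_add ((hx.fun_pow 2).const_mul 3))).fun_add (((h 2).const_add 1).fun_mul ((((((h 1).const_mul 28).fun_mul (h 2)).fun_add ((h 1).const_mul 12)).fun_add ((hx.const_mul 12).fun_mul (h 2))).fun_add (hx.const_mul 6)))))) ?_)
    push_cast; ring
  -- time derivative of the characteristic
  have hx := hasDerivAt_const t x
  have QT := HasDerivAt.deriv ((((T0 t x).fun_pow 2).const_mul (1 / 2)).fun_mul ((((((T0 t x).fun_pow 2).const_mul 2).fun_mul (T4 t x)).fun_add (((T0 t x).const_mul 2).fun_mul ((((((T2 t x).const_mul 7).const_add 3).fun_add (((T2 t x).fun_pow 2).const_mul 4)).fun_add (((T1 t x).const_mul 6).fun_mul (T3 t x))).fun_add ((hx.const_mul 2).fun_mul (T3 t x))))).fun_add (((T2 t x).const_add 1).fun_mul (((((T1 t x).fun_pow 2).const_mul 14).fun_add ((hx.const_mul 12).fun_mul (T1 t x))).fun_add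 ((hx.fun_pow 2).const_mul 3)))))
  rw [E2, hQ]
  refine Eq.trans (by rw [hQf]; rfl) (QT.trans ?_)
  push_cast
  ring
end

section
/- Let k₁ ∈ ℝ, let Φ, B : ℝ → ℝ be smooth with Φ(s) > 0 and Φ′(s) ≠ 0 for all s, and let H : ℝ → ℝ be smooth with H′(s) = B(s)·Φ′(s)/(2·Φ(s)^{3/2}) for all s. Define Ψ : ℝ × ℝ → ℝ by Ψ(s,p) := p·B(s) + (2k₁·Φ(s)^{3/2} − p²·Φ′(s)² + 2p²·Φ(s)·Φ″(s))/(2Φ′(s)). Let u : ℝ × ℝ → ℝ be a smooth function satisfying u_t = Φ(u)·u_xx + Ψ(u, u_x) at every point. Then at every point (t,x): ∂_t[Φ(u)^{−1/2}] = ∂_x[−k₁·x/2 − u_x·Φ′(u)/(2·Φ(u)^{1/2}) − H(u)]. In other words, ρ₋₁ := Φ(u)^{−1/2} is a conserved density with flux σ₋₁ := −k₁x/2 − u_xΦ′(u)/(2√Φ(u)) − H(u). -/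
theorem stmt_16 (k₁ : ℝ) (Φ B : ℝ → ℝ) (hΦ : ContDiff ℝ (⊤ : ℕ∞) Φ) (hB : ContDiff ℝ (⊤ : ℕ∞) B)
    (hΦpos : ∀ s, Φ s > 0) (hΦ' : ∀ s, deriv Φ s ≠ 0)
    (H : ℝ → ℝ) (hH : ContDiff ℝ (⊤ : ℕ∞) H)
    (hH' : ∀ s, deriv H s = B s * deriv Φ s / (2 * Φ s ^ ((3 : ℝ) / 2)))
    (Ψ : ℝ → ℝ → ℝ)
    (hΨ : ∀ s p, Ψ s p = p * B s +
      (2 * k₁ * Φ s ^ ((3 : ℝ) / 2) - p ^ 2 * (deriv Φ s) ^ 2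
        + 2 * p ^ 2 * Φ s * deriv (deriv Φ) s) / (2 * deriv Φ s))
    (u : ℝ → ℝ → ℝ) (hu : ContDiff ℝ (⊤ : ℕ∞) fun p : ℝ × ℝ => u p.1 p.2)
    (heq : ∀ t x, dt u t x = Φ (u t x) * dx u 2 t x + Ψ (u t x) (dx u 1 t x)) :
    ∀ t x, deriv (fun s => Φ (u s x) ^ (-(1 : ℝ) / 2)) t =
      deriv (fun y => -(k₁ * y) / 2
        - dx u 1 t y * deriv Φ (u t y) / (2 * Real.sqrt (Φ (u t y)))
        - H (u t y)) x := by
  intro t x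
  have hut : ContDiff ℝ (⊤ : ℕ∞) (u t) :=
    hu.comp (contDiff_const.prodMk contDiff_id : ContDiff ℝ (⊤ : ℕ∞) fun y : ℝ => (t, y))
  have hux : ContDiff ℝ (⊤ : ℕ∞) (fun s => u s x) :=
    hu.comp (contDiff_id.prodMk contDiff_const : ContDiff ℝ (⊤ : ℕ∞) fun s : ℝ => (s, x))
  have hdut : ContDiff ℝ (⊤ : ℕ∞) (deriv (u t)) := (contDiff_infty_iff_deriv.mp hut).2
  have hdΦ : ContDiff ℝ (⊤ : ℕ∞) (deriv Φ) := (contDiff_infty_iff_deriv.mp hΦ).2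
  have dΦ : ∀ s, HasDerivAt Φ (deriv Φ s) s := fun s =>
    ((contDiff_infty_iff_deriv.mp hΦ).1 s).hasDerivAt
  have ddΦ : ∀ s, HasDerivAt (deriv Φ) (deriv (deriv Φ) s) s := fun s =>
    ((contDiff_infty_iff_deriv.mp hdΦ).1 s).hasDerivAt
  have dH : ∀ s, HasDerivAt H (deriv H s) s := fun s =>
    ((contDiff_infty_iff_deriv.mp hH).1 s).hasDerivAt
  have d1 : HasDerivAt (u t) (deriv (u t) x) x :=
    ((contDiff_infty_iff_deriv.mp hut).1 x).hasDerivAt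
  have d2 : HasDerivAt (deriv (u t)) (deriv (deriv (u t)) x) x :=
    ((contDiff_infty_iff_deriv.mp hdut).1 x).hasDerivAt
  have d3 : HasDerivAt (fun s => u s x) (dt u t x) t :=
    ((contDiff_infty_iff_deriv.mp hux).1 t).hasDerivAt
  have e1 : ∀ y, dx u 1 t y = deriv (u t) y := fun y => by simp [dx]
  have e2 : dx u 2 t x = deriv (deriv (u t)) x := by
    simp [dx, iteratedDeriv_succ, iteratedDeriv_one]
  have hp := hΦpos (u t x)
  have hr : 0 < Real.sqrt (Φ (u t x)) := Real.sqrt_pos.mpr hp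
  have hsq : Φ (u t x) = Real.sqrt (Φ (u t x)) ^ 2 := (Real.sq_sqrt hp.le).symm
  have p1 : Φ (u t x) ^ ((3 : ℝ) / 2) = Real.sqrt (Φ (u t x)) ^ 3 := by
    rw [Real.sqrt_eq_rpow, ← Real.rpow_natCast, ← Real.rpow_mul hp.le]; norm_num
  have p2 : Φ (u t x) ^ (-(1 : ℝ) / 2 - 1) = (Real.sqrt (Φ (u t x)) ^ 3)⁻¹ := by
    rw [← p1, ← Real.rpow_neg hp.le]; norm_num
  have L := ((dΦ (u t x)).comp t d3).rpow_const (p := -(1 : ℝ) / 2) (Or.inl hp.ne')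
  have G := (dΦ (u t x)).comp x d1
  have G2 := (ddΦ (u t x)).comp x d1
  have S := (G.sqrt hp.ne').const_mul 2
  have R := ((((hasDerivAt_id x).const_mul k₁).neg.div_const 2).sub
    ((d2.mul G2).div S (by simpa using hr.ne'))).sub ((dH (u t x)).comp x d1)
  simp only [e1]
  refine L.deriv.trans (Eq.trans ?_ R.deriv.symm)
  simp only [Function.comp_apply, Pi.mul_apply, heq, hΨ, e1, e2, hH', p1, p2]
  have h' := hΦ' (u t x)
  generalize deriv (deriv Φ) (u t x) = b at *
  generalize deriv Φ (u t x) = a at *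
  generalize Real.sqrt (Φ (u t x)) = r at *
  rw [hsq]
  field_simp
  ring
end

section
/- Let β₀ ∈ ℝ and let α, γ : ℝ → ℝ be smooth. Let u : ℝ × ℝ → ℝ be a smooth function satisfying u_t = u_xx + α(u) + β₀·u_x + γ(u)·u_x² at every point. Then at every point (t,x): ∂_t[−β₀ − 2γ(u)·u_x] = ∂_x[−2α(u)·γ(u) − 2γ(u)²·u_x² − 2γ(u)·(β₀·u_x + u_xx)]. In other words, ρ₀ := −β₀ − 2γ(u)u_x is a conserved density with flux σ₀ := −2αγ − 2γ²u_x² − 2γ(β₀u_x + u_xx). -/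
theorem hasDerivAt_comp_curve {E : Type*} [NormedAddCommGroup E] [NormedSpace ℝ E]
    (G : ℝ × ℝ → E) (hG : Differentiable ℝ G) (c : ℝ → ℝ × ℝ) (v : ℝ × ℝ) (s : ℝ)
    (hc : HasDerivAt c v s) : HasDerivAt (fun r => G (c r)) (fderiv ℝ G (c s) v) s :=
  HasFDerivAt.comp_hasDerivAt (l := G) (f := c) s (hG (c s)).hasFDerivAt hc

theorem hasDerivAt_clm_curve
    (G : ℝ × ℝ → (ℝ × ℝ →L[ℝ] ℝ)) (hG : Differentiable ℝ G) (c : ℝ → ℝ × ℝ) (v w : ℝ × ℝ) (s : ℝ)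
    (hc : HasDerivAt c v s) : HasDerivAt (fun r => G (c r) w) (fderiv ℝ G (c s) v w) s := by
  have h := (hasDerivAt_comp_curve G hG c v s hc).clm_apply (hasDerivAt_const s w)
  simpa using h

theorem stmt_17 (β₀ : ℝ) (α γ : ℝ → ℝ) (hα : ContDiff ℝ (⊤ : ℕ∞) α) (hγ : ContDiff ℝ (⊤ : ℕ∞) γ)
    (u : ℝ → ℝ → ℝ) (hu : ContDiff ℝ (⊤ : ℕ∞) fun p : ℝ × ℝ => u p.1 p.2)
    (heq : ∀ t x, dt u t x = dx u 2 t x + α (u t x) + β₀ * dx u 1 t x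
      + γ (u t x) * (dx u 1 t x) ^ 2) :
    ∀ t x, deriv (fun s => -β₀ - 2 * γ (u s x) * dx u 1 s x) t =
      deriv (fun y => -2 * α (u t y) * γ (u t y) - 2 * γ (u t y) ^ 2 * (dx u 1 t y) ^ 2
        - 2 * γ (u t y) * (β₀ * dx u 1 t y + dx u 2 t y)) x := by
  intro t x
  set F : ℝ × ℝ → ℝ := fun p => u p.1 p.2 with hF
  have hFd : Differentiable ℝ F := hu.differentiable (by simp)
  have hF' : ContDiff ℝ (⊤ : ℕ∞) (fderiv ℝ F) := hu.fderiv_right (by simp)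
  have hF'd : Differentiable ℝ (fderiv ℝ F) := hF'.differentiable (by simp)
  have h1 : ∀ t x : ℝ, HasDerivAt (fun s : ℝ => (s, x)) ((1 : ℝ), (0 : ℝ)) t := fun t x =>
    (hasDerivAt_id t).prodMk (hasDerivAt_const t x)
  have h2 : ∀ t x : ℝ, HasDerivAt (fun y : ℝ => (t, y)) ((0 : ℝ), (1 : ℝ)) x := fun t x =>
    (hasDerivAt_const x t).prodMk (hasDerivAt_id x)
  have ht : ∀ t x, HasDerivAt (fun s => u s x) (fderiv ℝ F (t, x) (1, 0)) t := fun t x =>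
    hasDerivAt_comp_curve F hFd (fun s => (s, x)) _ t (h1 t x)
  have hx : ∀ t x, HasDerivAt (fun y => u t y) (fderiv ℝ F (t, x) (0, 1)) x := fun t x =>
    hasDerivAt_comp_curve F hFd (fun y => (t, y)) _ x (h2 t x)
  have hdt : ∀ t x, dt u t x = fderiv ℝ F (t, x) (1, 0) := fun t x => (ht t x).deriv
  have hdx : ∀ t x, dx u 1 t x = fderiv ℝ F (t, x) (0, 1) := fun t x => by
    unfold dx
    rw [iteratedDeriv_one]
    exact (hx t x).deriv
  have hxt : HasDerivAt (fun s => fderiv ℝ F (s, x) (0, 1))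
      (fderiv ℝ (fderiv ℝ F) (t, x) (1, 0) (0, 1)) t :=
    hasDerivAt_clm_curve _ hF'd (fun s => (s, x)) _ _ t (h1 t x)
  have htx : HasDerivAt (fun y => fderiv ℝ F (t, y) (1, 0))
      (fderiv ℝ (fderiv ℝ F) (t, x) (0, 1) (1, 0)) x :=
    hasDerivAt_clm_curve _ hF'd (fun y => (t, y)) _ _ x (h2 t x)
  have hsymm : fderiv ℝ (fderiv ℝ F) (t, x) (0, 1) (1, 0)
      = fderiv ℝ (fderiv ℝ F) (t, x) (1, 0) (0, 1) :=
    second_derivative_symmetric (fun y => (hFd y).hasFDerivAt) (hF'd (t, x)).hasFDerivAt _ _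
  have hγd : HasDerivAt γ (deriv γ (u t x)) (u t x) :=
    (hγ.differentiable (by simp) _).hasDerivAt
  have hL : (fun s => -β₀ - 2 * γ (u s x) * dx u 1 s x)
      = fun s => -β₀ - 2 * γ (u s x) * fderiv ℝ F (s, x) (0, 1) := by
    funext s
    rw [hdx]
  have hR : (fun y => -2 * α (u t y) * γ (u t y) - 2 * γ (u t y) ^ 2 * (dx u 1 t y) ^ 2
        - 2 * γ (u t y) * (β₀ * dx u 1 t y + dx u 2 t y))
      = fun y => -2 * γ (u t y) * fderiv ℝ F (t, y) (1, 0) := by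
    funext y
    rw [← hdt, heq]
    ring
  rw [hL, hR]
  have gt : HasDerivAt (fun s => γ (u s x)) _ t := HasDerivAt.comp t hγd (ht t x)
  have gx : HasDerivAt (fun y => γ (u t y)) _ x := HasDerivAt.comp x hγd (hx t x)
  have e1 := (((gt.const_mul 2).mul hxt).const_sub (-β₀)).deriv
  have e2 := ((gx.const_mul (-2)).mul htx).deriv
  refine Eq.trans e1 (Eq.trans ?_ e2.symm)
  rw [hsymm]
  ring
end

section
/- Let d₁ ∈ ℝ and let β : ℝ → ℝ be smooth with β′(s) ≠ 0 for all s. Let u : ℝ × ℝ → ℝ be a smooth function satisfying u_t = u_xx + (β″(u)/β′(u))·u_x² + β(u)·u_x + d₁/β′(u) at every point. Then at every point (t,x): ∂_t[−β(u) − 2(β″(u)/β′(u))·u_x] = ∂_x[ −((β(u)² + 2d₁x)·β′(u)² + 2β′(u)³·u_x + 4β″(u)·(d₁ + u_x²·β″(u)) + 4β′(u)·β″(u)·(β(u)·u_x + u_xx)) / (2β′(u)²) ]. In other words, ρ₀ := −β(u) − 2(β″/β′)(u)·u_x is a conserved density with the displayed flux σ₀. -/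
theorem aux_t (u : ℝ → ℝ → ℝ) (hu : ContDiff ℝ (⊤ : ℕ∞) fun p : ℝ × ℝ => u p.1 p.2) (t x : ℝ) :
    HasDerivAt (fun s => u s x) (fderiv ℝ (fun p : ℝ × ℝ => u p.1 p.2) (t, x) (1, 0)) t := by
  have h := (hu.differentiable (by simp) (t, x)).hasFDerivAt
  have hc : HasDerivAt (fun s : ℝ => (s, x)) ((1 : ℝ), (0 : ℝ)) t :=
    (hasDerivAt_id t).prodMk (hasDerivAt_const t x)
  exact h.comp_hasDerivAt t hc

theorem aux_x (u : ℝ → ℝ → ℝ) (hu : ContDiff ℝ (⊤ : ℕ∞) fun p : ℝ × ℝ => u p.1 p.2) (t x : ℝ) :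
    HasDerivAt (fun y => u t y) (fderiv ℝ (fun p : ℝ × ℝ => u p.1 p.2) (t, x) (0, 1)) x := by
  have h := (hu.differentiable (by simp) (t, x)).hasFDerivAt
  have hc : HasDerivAt (fun s : ℝ => (t, s)) ((0 : ℝ), (1 : ℝ)) x :=
    (hasDerivAt_const x t).prodMk (hasDerivAt_id x)
  exact h.comp_hasDerivAt x hc

theorem aux_F (F : ℝ × ℝ → ℝ) (hF : ContDiff ℝ (⊤ : ℕ∞) F) :
    ContDiff ℝ (⊤ : ℕ∞) (fderiv ℝ F) :=
  hF.fderiv_right (by simp)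

theorem aux_dir (F : ℝ × ℝ → ℝ) (hF : ContDiff ℝ (⊤ : ℕ∞) F) (c : ℝ → ℝ × ℝ) (v w : ℝ × ℝ)
    (t : ℝ) (hc : HasDerivAt c v t) :
    HasDerivAt (fun s => fderiv ℝ F (c s) w) (fderiv ℝ (fderiv ℝ F) (c t) v w) t := by
  have h : HasFDerivAt (fderiv ℝ F) (fderiv ℝ (fderiv ℝ F) (c t)) (c t) :=
    ((aux_F F hF).differentiable (by simp) (c t)).hasFDerivAt
  have a : HasDerivAt (fun s => fderiv ℝ F (c s)) (fderiv ℝ (fderiv ℝ F) (c t) v) t :=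
    h.comp_hasDerivAt t hc
  exact ((ContinuousLinearMap.apply ℝ ℝ w).hasFDerivAt).comp_hasDerivAt t a

theorem aux_symm (F : ℝ × ℝ → ℝ) (hF : ContDiff ℝ (⊤ : ℕ∞) F) (p v w : ℝ × ℝ) :
    fderiv ℝ (fderiv ℝ F) p v w = fderiv ℝ (fderiv ℝ F) p w v := by
  have hs : IsSymmSndFDerivAt ℝ F p := by
    apply (hF.contDiffAt (x := p)).isSymmSndFDerivAt
    rw [minSmoothness_of_isRCLikeNormedField]
    exact WithTop.coe_le_coe.2 (le_top : (2 : ℕ∞) ≤ ⊤)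
  exact hs v w

theorem aux_mixed (u : ℝ → ℝ → ℝ) (hu : ContDiff ℝ (⊤ : ℕ∞) fun p : ℝ × ℝ => u p.1 p.2)
    (t x : ℝ) : ∃ m, HasDerivAt (fun s => dx u 1 s x) m t ∧ HasDerivAt (fun y => dt u t y) m x := by
  have e1 : (fun s => dx u 1 s x) =
      fun s => fderiv ℝ (fun p : ℝ × ℝ => u p.1 p.2) (s, x) (0, 1) := by
    funext s
    simp only [dx, iteratedDeriv_one]
    exact (aux_x u hu s x).deriv
  have e2 : (fun y => dt u t y) =
      fun y => fderiv ℝ (fun p : ℝ × ℝ => u p.1 p.2) (t, y) (1, 0) := by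
    funext s
    exact (aux_t u hu t s).deriv
  have hc : HasDerivAt (fun s : ℝ => (s, x)) ((1 : ℝ), (0 : ℝ)) t :=
    (hasDerivAt_id t).prodMk (hasDerivAt_const t x)
  have hc2 : HasDerivAt (fun s : ℝ => (t, s)) ((0 : ℝ), (1 : ℝ)) x :=
    (hasDerivAt_const x t).prodMk (hasDerivAt_id x)
  have a1 := aux_dir _ hu _ _ (0, 1) t hc
  have a2 := aux_dir _ hu _ _ (1, 0) x hc2
  rw [aux_symm _ hu] at a2
  rw [e1, e2]
  exact ⟨_, a1, a2⟩

theorem stmt_18 (d₁ : ℝ) (β : ℝ → ℝ) (hβ : ContDiff ℝ (⊤ : ℕ∞) β)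
    (hβ' : ∀ s, deriv β s ≠ 0)
    (u : ℝ → ℝ → ℝ) (hu : ContDiff ℝ (⊤ : ℕ∞) fun p : ℝ × ℝ => u p.1 p.2)
    (heq : ∀ t x, dt u t x = dx u 2 t x
      + (deriv (deriv β) (u t x) / deriv β (u t x)) * (dx u 1 t x) ^ 2
      + β (u t x) * dx u 1 t x + d₁ / deriv β (u t x)) :
    ∀ t x, deriv (fun s =>
        -β (u s x) - 2 * (deriv (deriv β) (u s x) / deriv β (u s x)) * dx u 1 s x) t =
      deriv (fun y =>
        -(((β (u t y) ^ 2 + 2 * d₁ * y) * (deriv β (u t y)) ^ 2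
            + 2 * (deriv β (u t y)) ^ 3 * dx u 1 t y
            + 4 * deriv (deriv β) (u t y) * (d₁ + (dx u 1 t y) ^ 2 * deriv (deriv β) (u t y))
            + 4 * deriv β (u t y) * deriv (deriv β) (u t y)
                * (β (u t y) * dx u 1 t y + dx u 2 t y))
          / (2 * (deriv β (u t y)) ^ 2))) x := by
  intro t x
  have hb1 : ContDiff ℝ (⊤ : ℕ∞) (deriv β) := (contDiff_infty_iff_deriv.1 hβ).2
  have hb2 : ContDiff ℝ (⊤ : ℕ∞) (deriv (deriv β)) := (contDiff_infty_iff_deriv.1 hb1).2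
  have hB : ∀ s, HasDerivAt β (deriv β s) s := fun s =>
    (hβ.differentiable (by simp) s).hasDerivAt
  have hB1 : ∀ s, HasDerivAt (deriv β) (deriv (deriv β) s) s := fun s =>
    (hb1.differentiable (by simp) s).hasDerivAt
  have hB2 : ∀ s, HasDerivAt (deriv (deriv β)) (deriv (deriv (deriv β)) s) s := fun s =>
    (hb2.differentiable (by simp) s).hasDerivAt
  have hut : HasDerivAt (fun s => u s x) (dt u t x) t :=
    (aux_t u hu t x).differentiableAt.hasDerivAt
  have hux : HasDerivAt (fun y => u t y) (dx u 1 t x) x := by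
    have := (aux_x u hu t x).differentiableAt.hasDerivAt
    simpa [dx, iteratedDeriv_one] using this
  have hutc : ContDiff ℝ (⊤ : ℕ∞) (u t) :=
    hu.comp (contDiff_const.prodMk contDiff_id : ContDiff ℝ (⊤ : ℕ∞) fun y : ℝ => (t, y))
  have huxx : HasDerivAt (fun y => dx u 1 t y) (dx u 2 t x) x := by
    have h := ((contDiff_infty_iff_deriv.1 hutc).2.differentiable (by simp) x).hasDerivAt
    simpa [dx, iteratedDeriv_one, iteratedDeriv_succ] using h
  obtain ⟨m, hm1, hm2⟩ := aux_mixed u hu t x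
  have hG : HasDerivAt (fun s => deriv (deriv β) s / deriv β s) _ (u t x) :=
    (hB2 (u t x)).div (hB1 (u t x)) (hβ' _)
  have L := ((hB (u t x)).comp t hut).neg.sub (((hG.comp t hut).const_mul 2).mul hm1)
  have hR : (fun y =>
        -(((β (u t y) ^ 2 + 2 * d₁ * y) * (deriv β (u t y)) ^ 2
            + 2 * (deriv β (u t y)) ^ 3 * dx u 1 t y
            + 4 * deriv (deriv β) (u t y) * (d₁ + (dx u 1 t y) ^ 2 * deriv (deriv β) (u t y))
            + 4 * deriv β (u t y) * deriv (deriv β) (u t y)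
                * (β (u t y) * dx u 1 t y + dx u 2 t y))
          / (2 * (deriv β (u t y)) ^ 2))) = fun y =>
        (-(β (u t y) * β (u t y) / 2) - d₁ * y - deriv β (u t y) * dx u 1 t y)
          - 2 * (deriv (deriv β) (u t y) / deriv β (u t y)) * dt u t y := by
    funext y
    rw [heq t y]
    have := hβ' (u t y)
    field_simp
    ring
  rw [hR]
  have cB := (hB (u t x)).comp x hux
  have R := ((((cB.mul cB).div_const 2).neg.sub ((hasDerivAt_id x).const_mul d₁)).sub
    (((hB1 (u t x)).comp x hux).mul huxx)).sub (((hG.comp x hux).const_mul 2).mul hm2)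
  refine (L.deriv).trans (Eq.trans ?_ (R.deriv).symm)
  have h0 := hβ' (u t x)
  have key : deriv β (u t x) * dt u t x = deriv β (u t x) * dx u 2 t x
      + deriv (deriv β) (u t x) * (dx u 1 t x) ^ 2
      + deriv β (u t x) * β (u t x) * dx u 1 t x + d₁ := by
    rw [heq t x]
    field_simp
  simp only [Function.comp_apply]
  linear_combination (-1 : ℝ) * key
end
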